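/- Let E be a real inner product space and F : E → E a continuous linear map that is skew-adjoint, i.e. ⟨F x, y⟩ = -⟨x, F y⟩ for all x, y ∈ E, and suppose ‖F x‖ ≤ M ‖x‖ for all x ∈ E, where M > 0. Let s ≥ 1, let β₀ = 1, β₁, …, β_s be real numbers with β_s ≠ 0 (β_j = 0 for j > s), and assume the stability coefficients satisfy S_ℓ = 0 for all 1 ≤ ℓ ≤ s-1. Then for every θ ∈ E and real t, ‖Σ_{ℓ=0}^{s} β_ℓ t^ℓ F^ℓ θ‖² = ‖θ‖² + β_s² t^{2s} ‖F^s θ‖²; moreover for any C > 0 and any δt > 0 with δt^{2s-1} ≤ 2C/(β_s² M^{2s}), one has ‖Σ_{ℓ=0}^{s} β_ℓ δt^ℓ F^ℓ θ‖ ≤ (1 + C·δt) ‖θ‖. (This is the general ‘shrinking CFL’ stability condition δt ≤ (2C/β_s²)^{1/(2s-1)} (δx/a)^{2s/(2s-1)}.) -/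

import Mathlib

open RealInnerProductSpace Finset

/-!
Let `p(X) = ∑ β_j X^j` be the stability polynomial, so that one step of the scheme applies `p(tF)`.
Since the adjoint of `p(tF)` is `p(-tF)`, the energy `‖p(tF) θ‖²` equals `⟪θ, q(tF) θ⟫` with
`q(X) = p(-X) p(X)`. The polynomial `q` is even and its coefficient of `X^(2ℓ)` is `(-1)^ℓ S_ℓ`, so
when the intermediate `S_ℓ` vanish only `q(X) = β₀² + (-1)^s β_s² X^(2s)` is left; moving `s` of
the `2s` factors `F` back to the left of the inner product absorbs the sign. Under the CFL condition
the extra term is at most `2 C δt ‖θ‖²`, and `1 + 2 C δt ≤ (1 + C δt)²`.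
-/

open Polynomial

section StabilityPolynomial

variable {R : Type*} [CommSemiring R]

/-- The stability polynomial `∑_{j ≤ s} β_j X^j` of an `s`-stage scheme: one step of length `t`
applies it to `t F`. Coefficients of `β` beyond `s` are ignored. -/
noncomputable def stabilityPolynomial (β : ℕ → R) (s : ℕ) : R[X] :=
  ∑ j ∈ range (s + 1), monomial j (β j)

theorem coeff_stabilityPolynomial {β : ℕ → R} {s : ℕ} (hβ : ∀ j, s < j → β j = 0) :
    (stabilityPolynomial β s).coeff = β := by
  ext n
  simpa [stabilityPolynomial, coeff_monomial] using fun h => (hβ n h).symm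

theorem natDegree_stabilityPolynomial_le (β : ℕ → R) (s : ℕ) :
    (stabilityPolynomial β s).natDegree ≤ s :=
  natDegree_sum_le_of_forall_le _ _ fun _ hj =>
    (natDegree_monomial_le _).trans (Nat.lt_succ_iff.mp (mem_range.mp hj))

theorem aeval_smul_stabilityPolynomial_apply {M : Type*} [AddCommMonoid M] [Module R M]
    (f : Module.End R M) (β : ℕ → R) (s : ℕ) (t : R) (x : M) :
    aeval (t • f) (stabilityPolynomial β s) x =
      ∑ j ∈ range (s + 1), (β j * t ^ j) • (f ^ j) x := by
  simp [stabilityPolynomial, aeval_monomial, _root_.smul_pow, smul_smul, mul_comm]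

end StabilityPolynomial

section StabilityCoefficients

variable {R : Type*} [CommRing R]

/-- The stability coefficient `S_ℓ` of a scheme with coefficient sequence `β`. The subtraction
`2 * ℓ - j` is never truncated. -/
def stabilityCoeff (β : ℕ → R) (ℓ : ℕ) : R :=
  ∑ j ∈ range (2 * ℓ + 1), (-1) ^ (ℓ + j) * β j * β (2 * ℓ - j)

theorem coeff_comp_neg_X (p : R[X]) (n : ℕ) : (p.comp (-X)).coeff n = (-1) ^ n * p.coeff n := by
  simpa [mul_comm] using comp_C_mul_X_coeff (p := p) (r := (-1 : R)) (n := n)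

theorem coeff_comp_neg_X_mul_self_of_odd (p : R[X]) {n : ℕ} (hn : Odd n) :
    (p.comp (-X) * p).coeff n = 0 := by
  rw [coeff_mul]
  refine sum_involution (fun ij _ => ij.swap) ?_ ?_
    (fun _ hij => HasAntidiagonal.swap_mem_antidiagonal.mpr hij) (fun ij _ => ij.swap_swap)
  · rintro ⟨i, j⟩ hij
    obtain rfl : i + j = n := mem_antidiagonal.mp hij
    have hsign : (-1 : R) ^ i + (-1) ^ j = 0 := by
      rcases Nat.even_or_odd i with hi | hi
      · simp [hi.neg_one_pow, (Nat.odd_add'.mp hn |>.mpr hi).neg_one_pow]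
      · simp [hi.neg_one_pow, (Nat.odd_add.mp hn |>.mp hi).neg_one_pow]
    simp only [coeff_comp_neg_X, Prod.swap_prod_mk]
    linear_combination p.coeff i * p.coeff j * hsign
  · rintro ⟨i, j⟩ hij - hswap
    obtain rfl : j = i := congrArg Prod.fst hswap
    obtain rfl : j + j = n := mem_antidiagonal.mp hij
    exact Nat.not_even_iff_odd.mpr hn ⟨j, rfl⟩

theorem coeff_comp_neg_X_mul_self_two_mul (p : R[X]) (ℓ : ℕ) :
    (p.comp (-X) * p).coeff (2 * ℓ) = (-1) ^ ℓ * stabilityCoeff p.coeff ℓ := by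
  rw [coeff_mul, Nat.sum_antidiagonal_eq_sum_range_succ_mk, stabilityCoeff, mul_sum]
  refine sum_congr rfl fun j _ => ?_
  have hsign : (-1 : R) ^ ℓ * (-1) ^ (ℓ + j) = (-1) ^ j := by
    rw [pow_add, ← mul_assoc, ← mul_pow, neg_one_mul, neg_neg, one_pow, one_mul]
  rw [coeff_comp_neg_X, ← hsign]
  ring

theorem comp_neg_X_mul_self_eq_of_stabilityCoeff_eq_zero {p : R[X]} {s : ℕ} (hs : 1 ≤ s)
    (hp : p.natDegree ≤ s) (hS : ∀ ℓ, 1 ≤ ℓ → ℓ ≤ s - 1 → stabilityCoeff p.coeff ℓ = 0) :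
    p.comp (-X) * p = C (p.coeff 0 ^ 2) + C ((-1) ^ s * p.coeff s ^ 2) * X ^ (2 * s) := by
  have hdeg : (p.comp (-X)).natDegree ≤ s :=
    (natDegree_eq_of_degree_eq degree_comp_neg_X).trans_le hp
  ext n
  rw [coeff_add, coeff_C, coeff_C_mul_X_pow]
  obtain ⟨ℓ, rfl | rfl⟩ := Nat.even_or_odd' n
  · rcases Nat.eq_zero_or_pos ℓ with rfl | hℓ
    · simp [coeff_comp_neg_X, sq, mul_coeff_zero, show s ≠ 0 by omega]
    rcases lt_trichotomy ℓ s with hlt | rfl | hgt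
    · rw [coeff_comp_neg_X_mul_self_two_mul, hS ℓ hℓ (by omega), mul_zero, if_neg (by omega),
        if_neg (by omega), add_zero]
    · rw [if_neg (by omega), if_pos rfl, two_mul, coeff_mul_add_eq_of_natDegree_le hdeg hp,
        coeff_comp_neg_X]
      ring
    · rw [if_neg (by omega), if_neg (by omega), add_zero]
      exact coeff_eq_zero_of_natDegree_lt
        ((natDegree_mul_le_of_le hdeg hp).trans_lt (by omega))
  · rw [coeff_comp_neg_X_mul_self_of_odd p ⟨ℓ, rfl⟩, if_neg (by omega), if_neg (by omega),
      add_zero]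

end StabilityCoefficients

theorem isAdjointPair_aeval {R M N : Type*} [CommSemiring R] [AddCommMonoid M] [Module R M]
    [AddCommMonoid N] [Module R N] {B : M →ₗ[R] M →ₗ[R] N} {f g : Module.End R M}
    (h : LinearMap.IsAdjointPair B B f g) (p : R[X]) :
    LinearMap.IsAdjointPair B B (aeval f p) (aeval g p) := by
  induction p using Polynomial.induction_on with
  | C a => intro x y; simp [Module.algebraMap_end_apply]
  | add p q hp hq => intro x y; simp [hp x y, hq x y]
  | monomial n a hn =>
    intro x y
    rw [pow_succ, ← mul_assoc, map_mul _ (C a * X ^ n) X, aeval_X, mul_comm _ X,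
      map_mul _ X, aeval_X]
    exact hn.mul h x y

section SkewAdjoint

variable {R M N : Type*} [CommRing R] [AddCommGroup M] [Module R M] [AddCommGroup N] [Module R N]
  {B : M →ₗ[R] M →ₗ[R] N} {f : Module.End R M}

theorem apply_aeval_self_of_isSkewAdjoint (hf : B.IsSkewAdjoint f) (p : R[X]) (x : M) :
    B (aeval f p x) (aeval f p x) = B x (aeval f (p.comp (-X) * p) x) := by
  have hadj : LinearMap.IsAdjointPair B B f (-f : Module.End R M) := hf
  rw [isAdjointPair_aeval hadj p, map_mul, aeval_comp, map_neg, aeval_X, Module.End.mul_apply]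

theorem apply_pow_self_of_isSkewAdjoint (hf : B.IsSkewAdjoint f) (n : ℕ) (x : M) :
    B ((f ^ n) x) ((f ^ n) x) = (-1 : R) ^ n • B x ((f ^ (2 * n)) x) := by
  have hq : ((X : R[X]) ^ n).comp (-X) * X ^ n = C ((-1) ^ n) * X ^ (2 * n) := by
    rw [pow_comp, X_comp, neg_pow, map_pow, map_neg, map_one]
    ring
  have h := apply_aeval_self_of_isSkewAdjoint hf (X ^ n) x
  rw [hq, ← smul_eq_C_mul] at h
  simpa only [map_smul, map_pow, aeval_X, LinearMap.smul_apply] using h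

theorem apply_aeval_self_eq_add_of_isSkewAdjoint (hf : B.IsSkewAdjoint f) {p : R[X]} {s : ℕ}
    (hs : 1 ≤ s) (hp : p.natDegree ≤ s)
    (hS : ∀ ℓ, 1 ≤ ℓ → ℓ ≤ s - 1 → stabilityCoeff p.coeff ℓ = 0) (x : M) :
    B (aeval f p x) (aeval f p x) =
      p.coeff 0 ^ 2 • B x x + p.coeff s ^ 2 • B ((f ^ s) x) ((f ^ s) x) := by
  rw [apply_aeval_self_of_isSkewAdjoint hf,
    comp_neg_X_mul_self_eq_of_stabilityCoeff_eq_zero hs hp hS, apply_pow_self_of_isSkewAdjoint hf,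
    ← smul_eq_C_mul, map_add, aeval_C, map_smul, aeval_X_pow, LinearMap.add_apply,
    LinearMap.smul_apply, Module.algebraMap_end_apply, map_add, map_smul, map_smul, smul_smul,
    mul_comm ((-1) ^ s)]

end SkewAdjoint

theorem norm_iterate_le {E : Type*} [Norm E] {f : E → E} {M : ℝ} (hM : 0 ≤ M)
    (hf : ∀ x, ‖f x‖ ≤ M * ‖x‖) (n : ℕ) (x : E) : ‖f^[n] x‖ ≤ M ^ n * ‖x‖ := by
  induction n with
  | zero => simp
  | succ n ih =>
    calc ‖f^[n + 1] x‖ = ‖f (f^[n] x)‖ := by rw [Function.iterate_succ_apply']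
      _ ≤ M * ‖f^[n] x‖ := hf _
      _ ≤ M * (M ^ n * ‖x‖) := by gcongr
      _ = M ^ (n + 1) * ‖x‖ := by ring

section OrderedField

variable {𝕜 : Type*} [Field 𝕜] [LinearOrder 𝕜] [IsStrictOrderedRing 𝕜]

theorem le_one_add_mul_of_sq_le {a b c : 𝕜} (hb : 0 ≤ b) (hc : 0 ≤ c)
    (h : a ^ 2 ≤ (1 + 2 * c) * b ^ 2) : a ≤ (1 + c) * b := by
  refine le_of_sq_le_sq (h.trans ?_) (by positivity)
  calc (1 + 2 * c) * b ^ 2 ≤ (1 + 2 * c + c ^ 2) * b ^ 2 :=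
        mul_le_mul_of_nonneg_right (le_add_of_nonneg_right (sq_nonneg c)) (sq_nonneg b)
    _ = ((1 + c) * b) ^ 2 := by ring

theorem mul_pow_le_mul_of_pow_sub_one_le_div {a c x : 𝕜} {n : ℕ} (hn : n ≠ 0) (ha : 0 < a)
    (hx : 0 ≤ x) (h : x ^ (n - 1) ≤ c / a) : a * x ^ n ≤ c * x :=
  calc a * x ^ n = a * x ^ (n - 1) * x := by rw [mul_assoc, pow_sub_one_mul hn]
    _ ≤ c * x := mul_le_mul_of_nonneg_right ((le_div_iff₀' ha).mp h) hx

end OrderedField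

section Stability

variable {E : Type*} [SeminormedAddCommGroup E] [InnerProductSpace ℝ E] {F : E →ₗ[ℝ] E}
  {s : ℕ} {β : ℕ → ℝ}

theorem norm_sq_sum_smul_pow_apply (hF : ∀ x y : E, ⟪F x, y⟫ = -⟪x, F y⟫) (hs : 1 ≤ s)
    (hβ : ∀ j, s < j → β j = 0) (hS : ∀ ℓ, 1 ≤ ℓ → ℓ ≤ s - 1 → stabilityCoeff β ℓ = 0)
    (θ : E) (t : ℝ) :
    ‖∑ ℓ ∈ range (s + 1), (β ℓ * t ^ ℓ) • (F ^ ℓ) θ‖ ^ 2 =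
      β 0 ^ 2 * ‖θ‖ ^ 2 + β s ^ 2 * t ^ (2 * s) * ‖(F ^ s) θ‖ ^ 2 := by
  have hskew : (innerₗ E).IsSkewAdjoint ((t • F : E →ₗ[ℝ] E) : E → E) := fun x y => by
    simp [real_inner_smul_right, hF]
  have hcoeff := coeff_stabilityPolynomial hβ
  have henergy := apply_aeval_self_eq_add_of_isSkewAdjoint hskew hs
    (natDegree_stabilityPolynomial_le β s) (by rwa [hcoeff]) θ
  rw [hcoeff, aeval_smul_stabilityPolynomial_apply] at henergy
  simp only [innerₗ_apply_apply, real_inner_self_eq_norm_sq, smul_eq_mul] at henergy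
  rw [henergy, _root_.smul_pow, LinearMap.smul_apply, norm_smul, mul_pow, Real.norm_eq_abs, sq_abs,
    ← pow_mul, mul_comm s 2, mul_assoc]

theorem shrinking_CFL_stability_general (hF : ∀ x y : E, ⟪F x, y⟫ = -⟪x, F y⟫) (hs : 1 ≤ s)
    (hβ0 : β 0 = 1) (hβs : β s ≠ 0) (hβ : ∀ j, s < j → β j = 0)
    (hS : ∀ ℓ, 1 ≤ ℓ → ℓ ≤ s - 1 → stabilityCoeff β ℓ = 0) :
    (∀ (θ : E) (t : ℝ),
      ‖∑ ℓ ∈ range (s + 1), (β ℓ * t ^ ℓ) • (F ^ ℓ) θ‖ ^ 2 =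
        ‖θ‖ ^ 2 + β s ^ 2 * t ^ (2 * s) * ‖(F ^ s) θ‖ ^ 2) ∧
    (∀ M : ℝ, 0 < M → (∀ x : E, ‖F x‖ ≤ M * ‖x‖) → ∀ C δt : ℝ, 0 < C → 0 < δt →
      δt ^ (2 * s - 1) ≤ 2 * C / (β s ^ 2 * M ^ (2 * s)) →
      ∀ θ : E,
        ‖∑ ℓ ∈ range (s + 1), (β ℓ * δt ^ ℓ) • (F ^ ℓ) θ‖ ≤ (1 + C * δt) * ‖θ‖) := by
  have henergy (θ : E) (t : ℝ) := norm_sq_sum_smul_pow_apply hF hs hβ hS θ t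
  simp only [hβ0, one_pow, one_mul] at henergy
  refine ⟨henergy, fun M hM hFM C δt hC hδt hCFL θ => ?_⟩
  have hpow : ‖(F ^ s) θ‖ ≤ M ^ s * ‖θ‖ := by
    simpa only [Module.End.pow_apply] using norm_iterate_le hM.le hFM s θ
  have hgrowth : β s ^ 2 * M ^ (2 * s) * δt ^ (2 * s) ≤ 2 * C * δt :=
    mul_pow_le_mul_of_pow_sub_one_le_div (by omega) (by positivity) hδt.le hCFL
  refine le_one_add_mul_of_sq_le (norm_nonneg θ) (by positivity) ?_
  calc ‖∑ ℓ ∈ range (s + 1), (β ℓ * δt ^ ℓ) • (F ^ ℓ) θ‖ ^ 2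
      = ‖θ‖ ^ 2 + β s ^ 2 * δt ^ (2 * s) * ‖(F ^ s) θ‖ ^ 2 := henergy θ δt
    _ ≤ ‖θ‖ ^ 2 + β s ^ 2 * δt ^ (2 * s) * (M ^ s * ‖θ‖) ^ 2 := by gcongr
    _ = ‖θ‖ ^ 2 + β s ^ 2 * M ^ (2 * s) * δt ^ (2 * s) * ‖θ‖ ^ 2 := by ring
    _ ≤ ‖θ‖ ^ 2 + 2 * C * δt * ‖θ‖ ^ 2 := by gcongr
    _ = (1 + 2 * (C * δt)) * ‖θ‖ ^ 2 := by ring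

end Stability

/-- General "shrinking CFL" stability: if `F` is skew-adjoint with `‖F x‖ ≤ M ‖x‖`,
`β₀ = 1`, `β_s ≠ 0`, and all intermediate stability coefficients `S_ℓ` vanish for
`1 ≤ ℓ ≤ s - 1`, then the scheme `θ ↦ ∑ β_ℓ t^ℓ F^ℓ θ` satisfies the exact energy identity
`‖·‖² = ‖θ‖² + β_s² t^{2s} ‖F^s θ‖²`, and is stable (`≤ (1 + C δt)‖θ‖`) under the
condition `δt^{2s-1} ≤ 2C/(β_s² M^{2s})`. -/
theorem shrinking_CFL_stability
    {E : Type*} [NormedAddCommGroup E] [InnerProductSpace ℝ E]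
    (F : E →L[ℝ] E) (hF : ∀ x y : E, ⟪F x, y⟫ = -⟪x, F y⟫)
    (M : ℝ) (hM : 0 < M) (hFM : ∀ x : E, ‖F x‖ ≤ M * ‖x‖)
    (s : ℕ) (hs : 1 ≤ s) (β : ℕ → ℝ) (hβ0 : β 0 = 1) (hβs : β s ≠ 0)
    (hβ' : ∀ j, s < j → β j = 0)
    (S : ℕ → ℝ)
    (hS : ∀ ℓ, S ℓ = ∑ j ∈ range (2 * ℓ + 1), (-1 : ℝ) ^ (ℓ + j) * β j * β (2 * ℓ - j))
    (hSvanish : ∀ ℓ, 1 ≤ ℓ → ℓ ≤ s - 1 → S ℓ = 0) :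
    (∀ (θ : E) (t : ℝ),
      ‖∑ ℓ ∈ range (s + 1), (β ℓ * t ^ ℓ) • (F ^ ℓ) θ‖ ^ 2 =
        ‖θ‖ ^ 2 + β s ^ 2 * t ^ (2 * s) * ‖(F ^ s) θ‖ ^ 2) ∧
    (∀ (C δt : ℝ), 0 < C → 0 < δt →
      δt ^ (2 * s - 1) ≤ 2 * C / (β s ^ 2 * M ^ (2 * s)) →
      ∀ θ : E,
        ‖∑ ℓ ∈ range (s + 1), (β ℓ * δt ^ ℓ) • (F ^ ℓ) θ‖ ≤ (1 + C * δt) * ‖θ‖) := by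
  have h := shrinking_CFL_stability_general (F := F.toLinearMap) hF hs hβ0 hβs hβ'
    fun ℓ h₁ h₂ => (hS ℓ).symm.trans (hSvanish ℓ h₁ h₂)
  simp only [← ContinuousLinearMap.toLinearMap_pow] at h
  exact ⟨h.1, h.2 M hM hFM⟩
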